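/- In the finite fully-branched C^{1+α} IFS setting with its dimension-δ Gibbs measure μ, assume (MNL) holds. Let t ∈ C^δ(F,ℝ) and set A := ‖t‖_{C^δ} + sup over all finite words a and all x₀ ∈ F of the C^δ-seminorm of x ↦ X_a(x,x₀) (which is finite). Then there exist γ, ρ ∈ (0,1) and C₀ ≥ 1, depending only on A and the IFS, such that for all sufficiently small σ > 0, all x₀, y₀, z₀ ∈ F, and all n ≥ 1: Σ_{a∈𝒜ⁿ} Σ_{c∈𝒜ⁿ} w_a(x₀) w_c(y₀) · 1_{[t(x_c)−σ, t(x_c)+σ]}( X_a(x_c, z₀) ) ≤ C₀(σ^γ + ρⁿ), where x_c ∈ I_c is a fixed reference point. -/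

import Mathlib

open MeasureTheory
open scoped ENNReal

noncomputable section

/-- The geometric part of a finite, fully-branched `C^{1+α}` iterated function system:
finitely many `C¹` contractions `g a` of a compact interval `J = [lo, hi]` with
`0 < κm ≤ |g_a'| ≤ κp < 1` and pairwise disjoint images. -/
structure FiniteIFS where
  A : Type
  finA : Finite A
  neA : Nonempty A
  lo : ℝ
  hi : ℝ
  hlohi : lo < hi
  g : A → ℝ → ℝ
  gd : A → ℝ → ℝ
  hderiv : ∀ a, ∀ x ∈ Set.Icc lo hi, HasDerivAt (g a) (gd a x) x
  hmaps : ∀ a, Set.MapsTo (g a) (Set.Icc lo hi) (Set.Icc lo hi)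
  κm : ℝ
  κp : ℝ
  hκm : 0 < κm
  hκp : κp < 1
  hcontr : ∀ a, ∀ x ∈ Set.Icc lo hi, κm ≤ |gd a x| ∧ |gd a x| ≤ κp
  hdisj : ∀ a b : A, a ≠ b → Disjoint (g a '' Set.Icc lo hi) (g b '' Set.Icc lo hi)

namespace FiniteIFS

variable (S : FiniteIFS)

/-- The ambient compact interval `J`. -/
def J : Set ℝ := Set.Icc S.lo S.hi

/-- The composition `g_{a₁} ∘ ⋯ ∘ g_{a_n}` along a word. -/
def gW : List S.A → ℝ → ℝ
  | [], x => x
  | a :: l, x => S.g a (gW l x)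

/-- The chain-rule derivative of `gW` along a word. -/
def gD : List S.A → ℝ → ℝ
  | [], _ => 1
  | a :: l, x => S.gd a (S.gW l x) * gD l x

/-- The cylinder interval `I_a = g_a(J)`. -/
def cyl (l : List S.A) : Set ℝ := S.gW l '' S.J

/-- The attractor `F = ⋂ₙ ⋃_{a∈𝒜ⁿ} I_a`. -/
def attract : Set ℝ := ⋂ n : ℕ, ⋃ a : Fin (n + 1) → S.A, S.cyl (List.ofFn a)

/-- The distortion fluctuation `X_a(x,y) = log|g_a'(x)| − log|g_a'(y)|`. -/
def X (l : List S.A) (x y : ℝ) : ℝ := Real.log |S.gD l x| - Real.log |S.gD l y|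

/-- The finite-scale temporal distance. -/
def Delta (a b : List S.A) (x y : ℝ) : ℝ := S.X a x y - S.X b x y

end FiniteIFS

/-- A finite fully-branched `C^{1+α}` IFS together with its dimension-`δ` Gibbs
(equilibrium) measure `μ` for the potential `δ·log|g'|`, where `δ = dim_H F`. -/
structure FiniteGibbsIFS extends FiniteIFS where
  refPt : List A → ℝ
  refPt_mem : ∀ l, refPt l ∈ toFiniteIFS.cyl l
  δ : ℝ
  hδ : δ ∈ Set.Ioo (0:ℝ) 1
  hdim : ENNReal.ofReal δ = dimH toFiniteIFS.attract
  Cstar : ℝ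
  hCstar : 1 ≤ Cstar
  hXHolder : ∀ l : List A, ∀ x ∈ Set.Icc lo hi, ∀ y ∈ Set.Icc lo hi,
    |toFiniteIFS.X l x y| ≤ Cstar * |x - y| ^ δ
  hmult : ∀ l l' : List A,
    Metric.diam (toFiniteIFS.cyl (l ++ l')) ≤
        Cstar * (Metric.diam (toFiniteIFS.cyl l) * Metric.diam (toFiniteIFS.cyl l')) ∧
      Metric.diam (toFiniteIFS.cyl l) * Metric.diam (toFiniteIFS.cyl l') ≤
        Cstar * Metric.diam (toFiniteIFS.cyl (l ++ l'))
  μ : Measure ℝ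
  hprob : IsProbabilityMeasure μ
  hsupp : μ (toFiniteIFS.attract)ᶜ = 0
  hfrostman : ∀ l : List A,
    (μ (toFiniteIFS.cyl l)).toReal ≤ Cstar * Metric.diam (toFiniteIFS.cyl l) ^ δ ∧
      Metric.diam (toFiniteIFS.cyl l) ^ δ ≤ Cstar * (μ (toFiniteIFS.cyl l)).toReal
  w : List A → ℝ → ℝ
  hw : ∀ l : List A, ∀ x ∈ Set.Icc lo hi,
    (μ (toFiniteIFS.cyl l)).toReal ≤ Cstar * w l x ∧
      w l x ≤ Cstar * (μ (toFiniteIFS.cyl l)).toReal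
  conformal : ∀ n : ℕ, ∀ f : ℝ → ℝ, Continuous f →
    ∫ x, f x ∂μ = ∑' a : Fin n → A,
      ∫ x, w (List.ofFn a) x * f (toFiniteIFS.gW (List.ofFn a) x) ∂μ

namespace FiniteGibbsIFS

variable (S : FiniteGibbsIFS)

abbrev J : Set ℝ := S.toFiniteIFS.J
abbrev gW : List S.A → ℝ → ℝ := S.toFiniteIFS.gW
abbrev gD : List S.A → ℝ → ℝ := S.toFiniteIFS.gD
abbrev cyl : List S.A → Set ℝ := S.toFiniteIFS.cyl
abbrev attract : Set ℝ := S.toFiniteIFS.attract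
abbrev X : List S.A → ℝ → ℝ → ℝ := S.toFiniteIFS.X
abbrev Delta : List S.A → List S.A → ℝ → ℝ → ℝ := S.toFiniteIFS.Delta

/-- The Measure Non-Linearity condition (MNL): for every `N ≥ 1` there are words
`a, b ∈ 𝒜^N` such that the pushforward of `μ` under `X_a(·,x₀) - X_b(·,x₀)` is
absolutely non-concentrated: it gives mass at most `C_MNL |I|` to every interval `I`,
uniformly in `x₀ ∈ F`. -/
def MNL (CM : ℝ) : Prop :=
  ∀ N : ℕ, 1 ≤ N → ∃ a b : Fin N → S.A,
    ∀ x₀ ∈ S.attract, ∀ u v : ℝ, u ≤ v →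
      S.μ {x : ℝ | x ∈ S.attract ∧
          S.X (List.ofFn a) x x₀ - S.X (List.ofFn b) x x₀ ∈ Set.Icc u v}
        ≤ ENNReal.ofReal (CM * (v - u))

end FiniteGibbsIFS

end

namespace FiniteIFS

variable (S : FiniteIFS)

instance : Finite S.A := S.finA

noncomputable instance : Fintype S.A := Fintype.ofFinite S.A

open Classical in
/-- The words of length `n`. -/
noncomputable def words (n : ℕ) : Finset (List S.A) :=
  (Finset.univ : Finset (Fin n → S.A)).image List.ofFn

variable {S}

@[simp]
lemma mem_words {n : ℕ} {l : List S.A} : l ∈ S.words n ↔ l.length = n := by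
  simp only [words, Finset.mem_image, Finset.mem_univ, true_and]
  constructor
  · rintro ⟨a, rfl⟩
    simp
  · rintro rfl
    exact ⟨l.get, by simp⟩

lemma sum_words_ofFn {M : Type*} [AddCommMonoid M] (n : ℕ) (f : List S.A → M) :
    ∑ l ∈ S.words n, f l = ∑ a : Fin n → S.A, f (List.ofFn a) := by
  classical
  rw [words, Finset.sum_image]
  intro a _ b _ hab
  exact List.ofFn_injective hab

lemma card_words (n : ℕ) : (S.words n).card = Fintype.card S.A ^ n := by
  classical
  rw [words, Finset.card_image_of_injective _ List.ofFn_injective]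
  simp

lemma sum_words_zero (f : List S.A → ℝ) : ∑ l ∈ S.words 0, f l = f [] := by
  rw [sum_words_ofFn]
  simp

lemma sum_words_add (m n : ℕ) (f : List S.A → ℝ) :
    ∑ l ∈ S.words (m + n), f l = ∑ l ∈ S.words m, ∑ l' ∈ S.words n, f (l ++ l') := by
  rw [← Finset.sum_product']
  refine Finset.sum_nbij' (fun l => (l.take m, l.drop m)) (fun q => q.1 ++ q.2) ?_ ?_ ?_ ?_ ?_
  · intro l hl
    simp only [mem_words, Finset.mem_product, List.length_take, List.length_drop] at *
    omega
  · rintro ⟨a, b⟩ h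
    simp only [mem_words, Finset.mem_product, List.length_append] at *
    omega
  · intro l _
    simp
  · rintro ⟨a, b⟩ h
    simp only [mem_words, Finset.mem_product] at h
    ext1 <;> simp [← h.1]
  · intro l _
    simp

lemma gW_append (l l' : List S.A) (x : ℝ) : S.gW (l ++ l') x = S.gW l (S.gW l' x) := by
  induction l with
  | nil => rfl
  | cons a l ih => simp [gW, ih]

lemma gW_mem (l : List S.A) {x : ℝ} (hx : x ∈ S.J) : S.gW l x ∈ S.J := by
  induction l with
  | nil => exact hx
  | cons a l ih => exact S.hmaps a ih

lemma gD_ne_zero (l : List S.A) {x : ℝ} (hx : x ∈ S.J) : S.gD l x ≠ 0 := by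
  induction l with
  | nil => simp [gD]
  | cons a l ih =>
    refine mul_ne_zero ?_ ih
    exact abs_pos.1 (S.hκm.trans_le (S.hcontr a _ (gW_mem l hx)).1)

lemma gD_append (l l' : List S.A) (x : ℝ) :
    S.gD (l ++ l') x = S.gD l (S.gW l' x) * S.gD l' x := by
  induction l with
  | nil => simp [gD]
  | cons a l ih => simp [gD, ih, gW_append, mul_assoc]

lemma X_append (l l' : List S.A) {x y : ℝ} (hx : x ∈ S.J) (hy : y ∈ S.J) :
    S.X (l ++ l') x y = S.X l (S.gW l' x) (S.gW l' y) + S.X l' x y := by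
  simp only [X, gD_append, abs_mul]
  rw [Real.log_mul, Real.log_mul]
  · ring
  all_goals
    first
    | exact abs_ne_zero.2 (gD_ne_zero _ (gW_mem _ ‹_›))
    | exact abs_ne_zero.2 (gD_ne_zero _ ‹_›)

lemma κp_nonneg : 0 ≤ S.κp := by
  obtain ⟨a⟩ := S.neA
  have h := S.hcontr a S.lo ⟨le_rfl, S.hlohi.le⟩
  linarith [S.hκm]

lemma κm_lt_one : S.κm < 1 := by
  obtain ⟨a⟩ := S.neA
  have h := S.hcontr a S.lo ⟨le_rfl, S.hlohi.le⟩
  linarith [S.hκp]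

lemma abs_g_sub_le (a : S.A) {x y : ℝ} (hx : x ∈ S.J) (hy : y ∈ S.J) :
    |S.g a x - S.g a y| ≤ S.κp * |x - y| := by
  have := Convex.norm_image_sub_le_of_norm_hasDerivWithin_le (f := S.g a) (f' := S.gd a)
    (s := Set.Icc S.lo S.hi) (C := S.κp) (fun z hz => (S.hderiv a z hz).hasDerivWithinAt)
    (fun z hz => (S.hcontr a z hz).2) (convex_Icc _ _) hy hx
  simpa using this

lemma le_abs_g_sub (a : S.A) {x y : ℝ} (hx : x ∈ S.J) (hy : y ∈ S.J) :
    S.κm * |x - y| ≤ |S.g a x - S.g a y| := by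
  wlog hxy : x < y generalizing x y
  · rcases (not_lt.1 hxy).eq_or_lt with h | h
    · simp [h]
    · rw [abs_sub_comm x, abs_sub_comm (S.g a x)]
      exact this hy hx h
  have hsub : Set.Icc x y ⊆ Set.Icc S.lo S.hi := Set.Icc_subset_Icc hx.1 hy.2
  obtain ⟨c, hc, h⟩ := exists_hasDerivAt_eq_slope (S.g a) (S.gd a) hxy
    (fun z hz => (S.hderiv a z (hsub hz)).continuousAt.continuousWithinAt)
    (fun z hz => S.hderiv a z (hsub (Set.Ioo_subset_Icc_self hz)))
  have hne : y - x ≠ 0 := (sub_pos.2 hxy).ne'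
  rw [eq_div_iff hne] at h
  rw [abs_sub_comm x, abs_sub_comm (S.g a x), ← h, abs_mul]
  gcongr
  exact (S.hcontr a c (hsub (Set.Ioo_subset_Icc_self hc))).1

lemma abs_gW_sub_le (l : List S.A) {x y : ℝ} (hx : x ∈ S.J) (hy : y ∈ S.J) :
    |S.gW l x - S.gW l y| ≤ S.κp ^ l.length * |x - y| := by
  induction l with
  | nil => simp [gW]
  | cons a l ih =>
    refine (abs_g_sub_le a (gW_mem l hx) (gW_mem l hy)).trans ?_
    rw [List.length_cons, pow_succ', mul_assoc]
    exact mul_le_mul_of_nonneg_left ih κp_nonneg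

lemma le_abs_gW_sub (l : List S.A) {x y : ℝ} (hx : x ∈ S.J) (hy : y ∈ S.J) :
    S.κm ^ l.length * |x - y| ≤ |S.gW l x - S.gW l y| := by
  induction l with
  | nil => simp [gW]
  | cons a l ih =>
    refine le_trans ?_ (le_abs_g_sub a (gW_mem l hx) (gW_mem l hy))
    rw [List.length_cons, pow_succ', mul_assoc]
    exact mul_le_mul_of_nonneg_left ih S.hκm.le

lemma continuousOn_gW (l : List S.A) : ContinuousOn (S.gW l) S.J := by
  have : LipschitzOnWith (S.κp ^ l.length).toNNReal (S.gW l) S.J := by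
    refine LipschitzOnWith.of_dist_le_mul fun x hx y hy => ?_
    rw [Real.coe_toNNReal _ (pow_nonneg κp_nonneg _)]
    exact abs_gW_sub_le l hx hy
  exact this.continuousOn

lemma isCompact_cyl (l : List S.A) : IsCompact (S.cyl l) :=
  isCompact_Icc.image_of_continuousOn (continuousOn_gW l)

lemma measurableSet_cyl (l : List S.A) : MeasurableSet (S.cyl l) :=
  (isCompact_cyl l).isClosed.measurableSet

lemma cyl_subset_J (l : List S.A) : S.cyl l ⊆ S.J := by
  rintro _ ⟨x, hx, rfl⟩
  exact gW_mem l hx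

lemma gW_mem_cyl_append (l : List S.A) {l' : List S.A} {x : ℝ} (hx : x ∈ S.cyl l') :
    S.gW l x ∈ S.cyl (l ++ l') := by
  obtain ⟨y, hy, rfl⟩ := hx
  exact ⟨y, hy, gW_append _ _ _⟩

lemma cyl_append_subset (l l' : List S.A) : S.cyl (l ++ l') ⊆ S.cyl l := by
  rintro _ ⟨x, hx, rfl⟩
  exact ⟨S.gW l' x, gW_mem l' hx, (gW_append _ _ _).symm⟩

lemma abs_sub_le_diam {l : List S.A} {x y : ℝ} (hx : x ∈ S.cyl l) (hy : y ∈ S.cyl l) :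
    |x - y| ≤ Metric.diam (S.cyl l) :=
  Metric.dist_le_diam_of_mem (isCompact_cyl l).isBounded hx hy

lemma diam_cyl_le (l : List S.A) :
    Metric.diam (S.cyl l) ≤ S.κp ^ l.length * (S.hi - S.lo) := by
  refine Metric.diam_le_of_forall_dist_le
    (mul_nonneg (pow_nonneg κp_nonneg _) (sub_pos.2 S.hlohi).le) ?_
  rintro _ ⟨x, hx, rfl⟩ _ ⟨y, hy, rfl⟩
  refine (abs_gW_sub_le l hx hy).trans ?_
  refine mul_le_mul_of_nonneg_left ?_ (pow_nonneg κp_nonneg _)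
  rw [abs_le]
  constructor <;> linarith [hx.1, hx.2, hy.1, hy.2]

lemma le_diam_cyl (l : List S.A) :
    S.κm ^ l.length * (S.hi - S.lo) ≤ Metric.diam (S.cyl l) := by
  have hl : S.lo ∈ S.J := ⟨le_rfl, S.hlohi.le⟩
  have hh : S.hi ∈ S.J := ⟨S.hlohi.le, le_rfl⟩
  have h := le_abs_gW_sub l hh hl
  rw [abs_of_pos (sub_pos.2 S.hlohi)] at h
  exact h.trans (abs_sub_le_diam ⟨_, hh, rfl⟩ ⟨_, hl, rfl⟩)

lemma disjoint_cyl {l l' : List S.A} (hlen : l.length = l'.length) (hne : l ≠ l') :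
    Disjoint (S.cyl l) (S.cyl l') := by
  rw [Set.disjoint_left]
  rintro _ ⟨x, hx, rfl⟩ ⟨y, hy, h⟩
  induction l generalizing l' with
  | nil =>
    cases l' with
    | nil => exact hne rfl
    | cons b l' => simp at hlen
  | cons a l ih =>
    cases l' with
    | nil => simp at hlen
    | cons b l' =>
      simp only [List.length_cons, add_left_inj] at hlen
      have h' : S.g b (S.gW l' y) = S.g a (S.gW l x) := h
      by_cases hab : a = b
      · subst hab
        refine ih hlen (fun e => hne (by rw [e])) ?_
        have hb := le_abs_g_sub a (gW_mem l' hy) (gW_mem l hx)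
        rw [h', sub_self, abs_zero] at hb
        have h0 : |S.gW l' y - S.gW l x| ≤ 0 := by
          by_contra hc
          exact absurd hb (not_le.2 (mul_pos S.hκm (not_le.1 hc)))
        exact sub_eq_zero.1 (abs_nonpos_iff.1 h0)
      · exact Set.disjoint_left.1 (S.hdisj a b hab) ⟨_, gW_mem l hx, rfl⟩ ⟨_, gW_mem l' hy, h'⟩

lemma attract_subset_J : S.attract ⊆ S.J := by
  intro x hx
  obtain ⟨a, ha⟩ := Set.mem_iUnion.1 (Set.mem_iInter.1 hx 0)
  exact cyl_subset_J _ ha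

lemma exists_mem_cyl {x : ℝ} (hx : x ∈ S.attract) (n : ℕ) : ∃ l ∈ S.words n, x ∈ S.cyl l := by
  obtain _ | n := n
  · exact ⟨[], by simp, x, attract_subset_J hx, rfl⟩
  · obtain ⟨a, ha⟩ := Set.mem_iUnion.1 (Set.mem_iInter.1 hx n)
    exact ⟨_, by simp, ha⟩

end FiniteIFS

namespace FiniteGibbsIFS

open FiniteIFS

variable {S : FiniteGibbsIFS}

instance : IsProbabilityMeasure S.μ := S.hprob

variable (S) in
/-- The measure of the cylinder of a word. -/
noncomputable def mass (l : List S.A) : ℝ := (S.μ (S.toFiniteIFS.cyl l)).toReal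

lemma mass_nonneg (l : List S.A) : 0 ≤ S.mass l := ENNReal.toReal_nonneg

lemma Cstar_pos : 0 < S.Cstar := one_pos.trans_le S.hCstar

lemma measure_le_of_inter_attract_subset {s E : Set ℝ} (h : s ∩ S.attract ⊆ E) :
    S.μ s ≤ S.μ E := by
  calc S.μ s ≤ S.μ (E ∪ S.attractᶜ) := by
        refine measure_mono fun x hx => ?_
        by_cases hF : x ∈ S.attract
        · exact Or.inl (h ⟨hx, hF⟩)
        · exact Or.inr hF
    _ ≤ S.μ E + S.μ S.attractᶜ := measure_union_le _ _
    _ = S.μ E := by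
        have := S.hsupp
        simp [this]

lemma sum_mass_eq {n : ℕ} {T : Finset (List S.A)} (hT : T ⊆ S.words n) :
    ∑ l ∈ T, S.mass l = (S.μ (⋃ l ∈ T, S.toFiniteIFS.cyl l)).toReal := by
  rw [measure_biUnion_finset, ENNReal.toReal_sum]
  · rfl
  · intro l _
    exact measure_ne_top _ _
  · intro l hl l' hl' hne
    exact disjoint_cyl ((mem_words.1 (hT hl)).trans (mem_words.1 (hT hl')).symm) hne
  · intro l _
    exact measurableSet_cyl l

lemma sum_mass_le {n : ℕ} {T : Finset (List S.A)} (hT : T ⊆ S.words n) {E : Set ℝ}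
    (hE : ∀ l ∈ T, ∀ x ∈ S.toFiniteIFS.cyl l, x ∈ S.attract → x ∈ E) :
    ∑ l ∈ T, S.mass l ≤ (S.μ E).toReal := by
  rw [sum_mass_eq hT]
  refine ENNReal.toReal_mono (measure_ne_top _ _) (measure_le_of_inter_attract_subset ?_)
  rintro x ⟨hx, hF⟩
  simp only [Set.mem_iUnion] at hx
  obtain ⟨l, hl, hx⟩ := hx
  exact hE l hl x hx hF

lemma sum_mass_append (l : List S.A) (n : ℕ) :
    ∑ l' ∈ S.words n, S.mass (l ++ l') = S.mass l := by
  classical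
  have hinj : Function.Injective (fun l' : List S.A => l ++ l') :=
    fun a b h => List.append_cancel_left h
  have hsub : (S.words n).image (fun l' => l ++ l') ⊆ S.words (l.length + n) := by
    intro k hk
    obtain ⟨l', hl', rfl⟩ := Finset.mem_image.1 hk
    simpa using hl'
  have himg : ∑ l' ∈ S.words n, S.mass (l ++ l') =
      ∑ k ∈ (S.words n).image (fun l' => l ++ l'), S.mass k := by
    rw [Finset.sum_image fun a _ b _ h => hinj h]
  rw [himg]
  refine le_antisymm (sum_mass_le hsub ?_) ?_
  · intro k hk x hx _
    obtain ⟨l', -, rfl⟩ := Finset.mem_image.1 hk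
    exact cyl_append_subset l l' hx
  · rw [sum_mass_eq hsub]
    refine ENNReal.toReal_mono (measure_ne_top _ _) (measure_le_of_inter_attract_subset ?_)
    rintro x ⟨hx, hF⟩
    obtain ⟨k, hk, hxk⟩ := exists_mem_cyl hF (l.length + n)
    have hk' := mem_words.1 hk
    have hkl : k.take l.length = l := by
      by_contra hne
      refine Set.disjoint_left.1 (disjoint_cyl ?_ hne) ?_ hx
      · simp [hk']
      · rw [← List.take_append_drop l.length k] at hxk
        exact cyl_append_subset _ _ hxk
    simp only [Set.mem_iUnion]
    refine ⟨k, Finset.mem_image.2 ⟨k.drop l.length, ?_, ?_⟩, hxk⟩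
    · simp [hk']
    · conv_rhs => rw [← List.take_append_drop l.length k, hkl]

lemma mass_nil : S.mass [] = 1 := by
  refine le_antisymm ?_ ?_
  · exact measureReal_le_one
  · have h : S.μ Set.univ ≤ S.μ (S.toFiniteIFS.cyl []) :=
      measure_le_of_inter_attract_subset fun x hx => ⟨x, attract_subset_J hx.2, rfl⟩
    rw [measure_univ] at h
    exact ENNReal.toReal_one.symm.trans_le (ENNReal.toReal_mono (measure_ne_top _ _) h)

lemma sum_mass_words (n : ℕ) : ∑ l ∈ S.words n, S.mass l = 1 := by
  have := sum_mass_append (S := S) [] n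
  rw [mass_nil] at this
  simpa using this

lemma mass_le_one (l : List S.A) : S.mass l ≤ 1 := measureReal_le_one

lemma Cstar_rpow_le : S.Cstar ^ S.δ ≤ S.Cstar := by
  calc S.Cstar ^ S.δ ≤ S.Cstar ^ (1 : ℝ) :=
        Real.rpow_le_rpow_of_exponent_le S.hCstar S.hδ.2.le
    _ = S.Cstar := Real.rpow_one _

lemma mass_append_le (l l' : List S.A) :
    S.mass (l ++ l') ≤ S.Cstar ^ 4 * (S.mass l * S.mass l') := by
  have hC := S.hCstar
  have h0 : (0 : ℝ) ≤ S.Cstar := Cstar_pos.le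
  have hd := Metric.diam_nonneg (s := S.toFiniteIFS.cyl l)
  have hd' := Metric.diam_nonneg (s := S.toFiniteIFS.cyl l')
  calc S.mass (l ++ l')
      ≤ S.Cstar * Metric.diam (S.toFiniteIFS.cyl (l ++ l')) ^ S.δ := (S.hfrostman _).1
    _ ≤ S.Cstar * (S.Cstar * (Metric.diam (S.toFiniteIFS.cyl l) *
          Metric.diam (S.toFiniteIFS.cyl l'))) ^ S.δ := by
        gcongr
        · exact S.hδ.1.le
        · exact (S.hmult l l').1
    _ = S.Cstar * (S.Cstar ^ S.δ * (Metric.diam (S.toFiniteIFS.cyl l) ^ S.δ *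
          Metric.diam (S.toFiniteIFS.cyl l') ^ S.δ)) := by
        rw [Real.mul_rpow h0 (by positivity), Real.mul_rpow hd hd']
    _ ≤ S.Cstar * (S.Cstar * ((S.Cstar * S.mass l) * (S.Cstar * S.mass l'))) := by
        have hm := mass_nonneg l
        gcongr
        · exact Cstar_rpow_le
        · exact (S.hfrostman l).2
        · exact (S.hfrostman l').2
    _ = S.Cstar ^ 4 * (S.mass l * S.mass l') := by ring

lemma mul_mass_le (l l' : List S.A) :
    S.mass l * S.mass l' ≤ S.Cstar ^ 4 * S.mass (l ++ l') := by
  have h0 : (0 : ℝ) ≤ S.Cstar := Cstar_pos.le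
  have hd := Metric.diam_nonneg (s := S.toFiniteIFS.cyl l)
  have hd' := Metric.diam_nonneg (s := S.toFiniteIFS.cyl l')
  have hd'' := Metric.diam_nonneg (s := S.toFiniteIFS.cyl (l ++ l'))
  calc S.mass l * S.mass l'
      ≤ (S.Cstar * Metric.diam (S.toFiniteIFS.cyl l) ^ S.δ) *
          (S.Cstar * Metric.diam (S.toFiniteIFS.cyl l') ^ S.δ) := by
        refine mul_le_mul (S.hfrostman l).1 (S.hfrostman l').1 (mass_nonneg _) ?_
        positivity
    _ = S.Cstar ^ 2 * (Metric.diam (S.toFiniteIFS.cyl l) *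
          Metric.diam (S.toFiniteIFS.cyl l')) ^ S.δ := by
        rw [Real.mul_rpow hd hd']
        ring
    _ ≤ S.Cstar ^ 2 * (S.Cstar * Metric.diam (S.toFiniteIFS.cyl (l ++ l'))) ^ S.δ := by
        refine mul_le_mul_of_nonneg_left ?_ (by positivity)
        exact Real.rpow_le_rpow (by positivity) (S.hmult l l').2 S.hδ.1.le
    _ = S.Cstar ^ 2 * (S.Cstar ^ S.δ * Metric.diam (S.toFiniteIFS.cyl (l ++ l')) ^ S.δ) := by
        rw [Real.mul_rpow h0 hd'']
    _ ≤ S.Cstar ^ 2 * (S.Cstar * (S.Cstar * S.mass (l ++ l'))) := by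
        gcongr
        · exact Cstar_rpow_le
        · exact (S.hfrostman _).2
    _ = S.Cstar ^ 4 * S.mass (l ++ l') := by ring

lemma mass_le_pow (l : List S.A) :
    S.mass l ≤ S.Cstar * (S.hi - S.lo) ^ S.δ * (S.κp ^ S.δ) ^ l.length := by
  have hd := Metric.diam_nonneg (s := S.toFiniteIFS.cyl l)
  have hκ : 0 ≤ S.κp := κp_nonneg
  have hJ := (sub_pos.2 S.hlohi).le
  have h0 : (0 : ℝ) ≤ S.Cstar := Cstar_pos.le
  calc S.mass l ≤ S.Cstar * Metric.diam (S.toFiniteIFS.cyl l) ^ S.δ := (S.hfrostman l).1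
    _ ≤ S.Cstar * (S.κp ^ l.length * (S.hi - S.lo)) ^ S.δ := by
        gcongr
        · exact S.hδ.1.le
        · exact diam_cyl_le l
    _ = _ := by
        rw [Real.mul_rpow (by positivity) hJ, Real.rpow_pow_comm hκ]
        ring

lemma pow_le_mass (l : List S.A) :
    (S.hi - S.lo) ^ S.δ / S.Cstar * (S.κm ^ S.δ) ^ l.length ≤ S.mass l := by
  have hκ : 0 ≤ S.κm := S.hκm.le
  have hJ := (sub_pos.2 S.hlohi).le
  have hC : 0 < S.Cstar := Cstar_pos
  rw [div_mul_eq_mul_div, div_le_iff₀ hC]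
  calc (S.hi - S.lo) ^ S.δ * (S.κm ^ S.δ) ^ l.length
      = (S.κm ^ l.length * (S.hi - S.lo)) ^ S.δ := by
        rw [Real.mul_rpow (by positivity) hJ, Real.rpow_pow_comm hκ]
        ring
    _ ≤ Metric.diam (S.toFiniteIFS.cyl l) ^ S.δ := by
        have := le_diam_cyl l
        gcongr
        exact S.hδ.1.le
    _ ≤ S.mass l * S.Cstar := by
        rw [mul_comm]
        exact (S.hfrostman l).2

lemma abs_sub_rpow_le_mass {l : List S.A} {x y : ℝ} (hx : x ∈ S.toFiniteIFS.cyl l)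
    (hy : y ∈ S.toFiniteIFS.cyl l) : |x - y| ^ S.δ ≤ S.Cstar * S.mass l := by
  refine le_trans ?_ (S.hfrostman l).2
  have := S.hδ.1.le
  gcongr
  exact abs_sub_le_diam hx hy

lemma abs_X_le {l : List S.A} (a : List S.A) {x y : ℝ} (hx : x ∈ S.toFiniteIFS.cyl l)
    (hy : y ∈ S.toFiniteIFS.cyl l) : |S.toFiniteIFS.X a x y| ≤ S.Cstar ^ 2 * S.mass l := by
  refine (S.hXHolder a x (cyl_subset_J l hx) y (cyl_subset_J l hy)).trans ?_
  rw [pow_two, mul_assoc]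
  exact mul_le_mul_of_nonneg_left (abs_sub_rpow_le_mass hx hy) Cstar_pos.le

lemma abs_X_gW_le {l : List S.A} (a α : List S.A) {x y : ℝ} (hx : x ∈ S.toFiniteIFS.cyl l)
    (hy : y ∈ S.toFiniteIFS.cyl l) :
    |S.toFiniteIFS.X a (S.toFiniteIFS.gW α x) (S.toFiniteIFS.gW α y)| ≤
      S.Cstar ^ 2 * (S.κp ^ S.δ) ^ α.length * S.mass l := by
  have hxJ := cyl_subset_J l hx
  have hyJ := cyl_subset_J l hy
  have hκ : 0 ≤ S.κp := κp_nonneg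
  have h0 : (0 : ℝ) ≤ S.Cstar := Cstar_pos.le
  calc _ ≤ S.Cstar * |S.toFiniteIFS.gW α x - S.toFiniteIFS.gW α y| ^ S.δ :=
        S.hXHolder a _ (gW_mem α hxJ) _ (gW_mem α hyJ)
    _ ≤ S.Cstar * (S.κp ^ α.length * |x - y|) ^ S.δ := by
        gcongr
        · exact S.hδ.1.le
        · exact abs_gW_sub_le α hxJ hyJ
    _ = S.Cstar * ((S.κp ^ S.δ) ^ α.length * |x - y| ^ S.δ) := by
        rw [Real.mul_rpow (by positivity) (abs_nonneg _), Real.rpow_pow_comm hκ]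
    _ ≤ S.Cstar * ((S.κp ^ S.δ) ^ α.length * (S.Cstar * S.mass l)) := by
        gcongr
        exact abs_sub_rpow_le_mass hx hy
    _ = _ := by ring

open Classical in
variable (S) in
/-- The mass of the cylinder of `l` if `|f| ≤ s` somewhere on it, and `0` otherwise. -/
noncomputable def hitMass (f : ℝ → ℝ) (s : ℝ) (l : List S.A) : ℝ :=
  if ∃ x ∈ S.toFiniteIFS.cyl l, |f x| ≤ s then S.mass l else 0

lemma hitMass_nonneg (f : ℝ → ℝ) (s : ℝ) (l : List S.A) : 0 ≤ S.hitMass f s l := by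
  unfold hitMass
  split_ifs
  · exact mass_nonneg l
  · exact le_rfl

lemma hitMass_le_mass (f : ℝ → ℝ) (s : ℝ) (l : List S.A) : S.hitMass f s l ≤ S.mass l := by
  unfold hitMass
  split_ifs
  · exact le_rfl
  · exact mass_nonneg l

lemma hitMass_append_of_not {f : ℝ → ℝ} {s : ℝ} {l : List S.A}
    (h : ¬ ∃ x ∈ S.toFiniteIFS.cyl l, |f x| ≤ s) (l' : List S.A) :
    S.hitMass f s (l ++ l') = 0 := by
  refine if_neg ?_
  rintro ⟨x, hx, hf⟩
  exact h ⟨x, cyl_append_subset l l' hx, hf⟩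

lemma sum_hitMass_append_le (f : ℝ → ℝ) (s : ℝ) (l : List S.A) (n : ℕ) :
    ∑ l' ∈ S.words n, S.hitMass f s (l ++ l') ≤ S.hitMass f s l := by
  by_cases h : ∃ x ∈ S.toFiniteIFS.cyl l, |f x| ≤ s
  · have hl : S.hitMass f s l = S.mass l := if_pos h
    rw [hl, ← sum_mass_append l n]
    exact Finset.sum_le_sum fun l' _ => hitMass_le_mass _ _ _
  · simp only [hitMass_append_of_not h, Finset.sum_const_zero]
    exact hitMass_nonneg _ _ _

lemma sum_hitMass_anti (f : ℝ → ℝ) (s : ℝ) {m n : ℕ} (h : m ≤ n) :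
    ∑ l ∈ S.words n, S.hitMass f s l ≤ ∑ l ∈ S.words m, S.hitMass f s l := by
  obtain ⟨d, rfl⟩ := Nat.exists_eq_add_of_le h
  rw [sum_words_add]
  exact Finset.sum_le_sum fun l _ => sum_hitMass_append_le f s l d

lemma sum_hitMass_le_pow (f : ℝ → ℝ) (s : ℝ) (L k : ℕ)
    (hstep : ∀ j < k, ∀ l ∈ S.words (j * L),
      ∑ l' ∈ S.words L, S.hitMass f s (l ++ l') ≤ 1 / 2 * S.mass l) :
    ∑ l ∈ S.words (k * L), S.hitMass f s l ≤ (1 / 2) ^ k := by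
  induction k with
  | zero =>
    rw [zero_mul, sum_words_zero, pow_zero, ← mass_nil (S := S)]
    exact hitMass_le_mass _ _ _
  | succ k ih =>
    rw [add_mul, one_mul, sum_words_add, pow_succ']
    calc _ ≤ ∑ l ∈ S.words (k * L), 1 / 2 * S.hitMass f s l := by
          refine Finset.sum_le_sum fun l hl => ?_
          by_cases h : ∃ x ∈ S.toFiniteIFS.cyl l, |f x| ≤ s
          · have hl' : S.hitMass f s l = S.mass l := if_pos h
            rw [hl']
            exact hstep k (Nat.lt_succ_self k) l hl
          · simp only [hitMass_append_of_not h, Finset.sum_const_zero]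
            exact mul_nonneg (by norm_num) (hitMass_nonneg _ _ _)
      _ = 1 / 2 * ∑ l ∈ S.words (k * L), S.hitMass f s l := (Finset.mul_sum _ _ _).symm
      _ ≤ 1 / 2 * (1 / 2) ^ k := by
          gcongr
          exact ih fun j hj => hstep j (hj.trans (Nat.lt_succ_self k))

end FiniteGibbsIFS

namespace FiniteGibbsIFS

open FiniteIFS

variable {S : FiniteGibbsIFS}

lemma κp_rpow_nonneg : 0 ≤ S.κp ^ S.δ := Real.rpow_nonneg κp_nonneg _

lemma κp_rpow_lt_one : S.κp ^ S.δ < 1 := Real.rpow_lt_one κp_nonneg S.hκp S.hδ.1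

lemma κm_rpow_pos : 0 < S.κm ^ S.δ := Real.rpow_pos_of_pos S.hκm _

lemma κm_rpow_lt_one : S.κm ^ S.δ < 1 := Real.rpow_lt_one S.hκm.le κm_lt_one S.hδ.1

lemma hi_sub_lo_rpow_div_pos : 0 < (S.hi - S.lo) ^ S.δ / S.Cstar :=
  div_pos (Real.rpow_pos_of_pos (sub_pos.2 S.hlohi) _) Cstar_pos

lemma mass_pos (l : List S.A) : 0 < S.mass l :=
  (mul_pos hi_sub_lo_rpow_div_pos (pow_pos κm_rpow_pos _)).trans_le (pow_le_mass l)

lemma exists_mul_pow_le (K ε : ℝ) (hε : 0 < ε) : ∃ N : ℕ, 1 ≤ N ∧ K * (S.κp ^ S.δ) ^ N ≤ ε := by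
  have h := (tendsto_pow_atTop_nhds_zero_of_lt_one (κp_rpow_nonneg (S := S))
    κp_rpow_lt_one).const_mul K
  rw [mul_zero] at h
  obtain ⟨N, h1, h2⟩ := ((h.eventually_le_const hε).and (Filter.eventually_ge_atTop 1)).exists
  exact ⟨N, h2, h1⟩

/-- If `X_α - X_β` is non-concentrated, then on the children of a cylinder `l` a small
perturbation of it, with values up to `s` hit only a set of proportion at most `1 / 2`. -/
lemma sum_hitMass_step {CM ε : ℝ} (hCM : 0 < CM) (hε : CM * (6 * ε) ≤ 1 / 2) {α β : List S.A}
    {N L : ℕ} (hα : α.length = N) (hβ : β.length = N) {x₀ : ℝ}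
    (hαβ : ∀ u v : ℝ, u ≤ v → S.μ {x : ℝ | x ∈ S.attract ∧
      S.toFiniteIFS.X α x x₀ - S.toFiniteIFS.X β x x₀ ∈ Set.Icc u v} ≤
        ENNReal.ofReal (CM * (v - u)))
    (hN : 2 * S.Cstar ^ 2 * (S.κp ^ S.δ) ^ N ≤ ε)
    (hL : 2 * S.Cstar ^ 6 * (S.Cstar * (S.hi - S.lo) ^ S.δ) * (S.κp ^ S.δ) ^ L ≤ ε)
    (a b : List S.A) {z : ℝ} (hz : z ∈ S.J) {s : ℝ} (l : List S.A)
    (hs : s ≤ ε * S.mass l) :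
    ∑ l' ∈ S.words L, S.hitMass
      (fun x => S.toFiniteIFS.X (a ++ α) x z - S.toFiniteIFS.X (b ++ β) x z) s (l ++ l') ≤
        1 / 2 * S.mass l := by
  classical
  set f : ℝ → ℝ := fun x => S.toFiniteIFS.X (a ++ α) x z - S.toFiniteIFS.X (b ++ β) x z with hf
  by_cases hit : ∃ x ∈ S.toFiniteIFS.cyl l, |f x| ≤ s
  swap
  · simp only [hitMass_append_of_not hit, Finset.sum_const_zero]
    exact mul_nonneg (by norm_num) (mass_nonneg _)
  obtain ⟨x₁, hx₁, -⟩ := hit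
  set D : ℝ → ℝ := fun x => S.toFiniteIFS.X α x x₀ - S.toFiniteIFS.X β x x₀ with hD
  have hml := mass_nonneg l
  have hDsub : ∀ l' ∈ S.words L, ∀ x ∈ S.toFiniteIFS.cyl (l ++ l'),
      ∀ y ∈ S.toFiniteIFS.cyl (l ++ l'), |D x - D y| ≤ ε * S.mass l := by
    intro l' hl' x hx y hy
    have e : D x - D y = S.toFiniteIFS.X α x y - S.toFiniteIFS.X β x y := by
      simp only [hD, FiniteIFS.X]
      ring
    have hlen : l'.length = L := mem_words.1 hl'
    have hm : S.mass (l ++ l') ≤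
        S.Cstar ^ 4 * (S.mass l * (S.Cstar * (S.hi - S.lo) ^ S.δ * (S.κp ^ S.δ) ^ L)) := by
      refine (mass_append_le l l').trans ?_
      have := mass_le_pow l'
      rw [hlen] at this
      have h4 : 0 ≤ S.Cstar ^ 4 := pow_nonneg Cstar_pos.le _
      gcongr
    calc |D x - D y| ≤ |S.toFiniteIFS.X α x y| + |S.toFiniteIFS.X β x y| := by
          rw [e]
          exact abs_sub _ _
      _ ≤ 2 * S.Cstar ^ 2 * S.mass (l ++ l') := by
          linarith [abs_X_le α hx hy, abs_X_le β hx hy]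
      _ ≤ 2 * S.Cstar ^ 2 * (S.Cstar ^ 4 *
            (S.mass l * (S.Cstar * (S.hi - S.lo) ^ S.δ * (S.κp ^ S.δ) ^ L))) := by
          have : 0 ≤ 2 * S.Cstar ^ 2 := by positivity
          gcongr
      _ = (2 * S.Cstar ^ 6 * (S.Cstar * (S.hi - S.lo) ^ S.δ) * (S.κp ^ S.δ) ^ L) *
            S.mass l := by ring
      _ ≤ ε * S.mass l := by gcongr
  have hRsub : ∀ x ∈ S.toFiniteIFS.cyl l, ∀ y ∈ S.toFiniteIFS.cyl l,
      |(f x - D x) - (f y - D y)| ≤ ε * S.mass l := by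
    intro x hx y hy
    have hxJ : x ∈ S.toFiniteIFS.J := cyl_subset_J l hx
    have hyJ : y ∈ S.toFiniteIFS.J := cyl_subset_J l hy
    have e : (f x - D x) - (f y - D y) =
        S.toFiniteIFS.X a (S.toFiniteIFS.gW α x) (S.toFiniteIFS.gW α y) -
        S.toFiniteIFS.X b (S.toFiniteIFS.gW β x) (S.toFiniteIFS.gW β y) := by
      simp only [hf, hD, X_append a α hxJ hz, X_append b β hxJ hz, X_append a α hyJ hz,
        X_append b β hyJ hz]
      simp only [FiniteIFS.X]
      ring
    have h1 := abs_X_gW_le a α hx hy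
    have h2 := abs_X_gW_le b β hx hy
    rw [hα] at h1
    rw [hβ] at h2
    calc _ ≤ |S.toFiniteIFS.X a (S.toFiniteIFS.gW α x) (S.toFiniteIFS.gW α y)| +
          |S.toFiniteIFS.X b (S.toFiniteIFS.gW β x) (S.toFiniteIFS.gW β y)| := by
          rw [e]
          exact abs_sub _ _
      _ ≤ (2 * S.Cstar ^ 2 * (S.κp ^ S.δ) ^ N) * S.mass l := by linarith
      _ ≤ ε * S.mass l := by gcongr
  set T := (S.words L).filter fun l' => ∃ x ∈ S.toFiniteIFS.cyl (l ++ l'), |f x| ≤ s with hT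
  have hsum : ∑ l' ∈ S.words L, S.hitMass f s (l ++ l') =
      ∑ k ∈ T.image (fun l' => l ++ l'), S.mass k := by
    rw [Finset.sum_image fun p _ q _ h => List.append_cancel_left h, hT, Finset.sum_filter]
    rfl
  have hsub : T.image (fun l' => l ++ l') ⊆ S.words (l.length + L) := by
    intro k hk
    obtain ⟨l', hl', rfl⟩ := Finset.mem_image.1 hk
    have := mem_words.1 (Finset.mem_filter.1 hl').1
    simp [this]
  have hε0 : 0 ≤ ε := le_trans (mul_nonneg (by positivity) (pow_nonneg κp_rpow_nonneg _)) hN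
  set v := D x₁ - f x₁
  set w := 3 * ε * S.mass l
  have hw : 0 ≤ w := by positivity
  have hle := sum_mass_le hsub (E := {x : ℝ | x ∈ S.attract ∧
      S.toFiniteIFS.X α x x₀ - S.toFiniteIFS.X β x x₀ ∈ Set.Icc (v - w) (v + w)}) (by
    intro k hk y hy hyF
    obtain ⟨l', hl', rfl⟩ := Finset.mem_image.1 hk
    obtain ⟨hl'L, x₂, hx₂, hfx₂⟩ := Finset.mem_filter.1 hl'
    refine ⟨hyF, ?_⟩
    have h1 := abs_le.1 (hDsub l' hl'L y hy x₂ hx₂)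
    have h2 := abs_le.1 (hRsub x₁ hx₁ x₂ (cyl_append_subset l l' hx₂))
    have h3 := abs_le.1 (hfx₂.trans hs)
    change D y ∈ _
    constructor
    · simp only [v, w]
      linarith
    · simp only [v, w]
      linarith)
  rw [hsum]
  refine hle.trans ?_
  refine (ENNReal.toReal_mono ENNReal.ofReal_ne_top (hαβ (v - w) (v + w) (by linarith))).trans ?_
  rw [ENNReal.toReal_ofReal (mul_nonneg hCM.le (by linarith))]
  calc CM * (v + w - (v - w)) = CM * (6 * ε) * S.mass l := by
        simp only [w]
        ring
    _ ≤ 1 / 2 * S.mass l := by gcongr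

lemma MNL.exists_sum_hitMass_le {CM : ℝ} (hMNL : S.MNL CM) (hCM : 0 < CM)
    (hF : S.attract.Nonempty) :
    ∃ N L : ℕ, 1 ≤ N ∧ ∃ α ∈ S.words N, ∃ β ∈ S.words N,
      ∃ c : ℝ, 0 < c ∧ ∃ θ ∈ Set.Ioo (0 : ℝ) 1, ∀ (a b : List S.A), ∀ z ∈ S.J, ∀ s : ℝ,
        ∀ k : ℕ, s ≤ c * θ ^ k →
        ∑ l ∈ S.words (k * L), S.hitMass
          (fun x => S.toFiniteIFS.X (a ++ α) x z - S.toFiniteIFS.X (b ++ β) x z) s l ≤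
            (1 / 2) ^ k := by
  obtain ⟨x₀, hx₀⟩ := hF
  set ε : ℝ := 1 / (12 * CM) with hε
  have hε0 : 0 < ε := by positivity
  have hεCM : CM * (6 * ε) ≤ 1 / 2 := by
    rw [hε]
    field_simp
    norm_num
  obtain ⟨N, hN1, hN⟩ := exists_mul_pow_le (S := S) (2 * S.Cstar ^ 2) ε hε0
  obtain ⟨L, hL1, hL⟩ := exists_mul_pow_le (S := S)
    (2 * S.Cstar ^ 6 * (S.Cstar * (S.hi - S.lo) ^ S.δ)) ε hε0
  obtain ⟨α, β, hαβ⟩ := hMNL N hN1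
  have hc₀ := hi_sub_lo_rpow_div_pos (S := S)
  refine ⟨N, L, hN1, List.ofFn α, by simp, List.ofFn β, by simp,
    ε * ((S.hi - S.lo) ^ S.δ / S.Cstar), by positivity, (S.κm ^ S.δ) ^ L,
    ⟨pow_pos κm_rpow_pos _, pow_lt_one₀ κm_rpow_pos.le κm_rpow_lt_one (by omega)⟩, ?_⟩
  intro a b z hz s k hs
  refine sum_hitMass_le_pow _ _ _ _ fun j hj l hl => ?_
  refine sum_hitMass_step hCM hεCM (by simp) (by simp)
    (hαβ x₀ hx₀) hN hL a b hz l (hs.trans ?_)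
  rw [mul_assoc]
  refine mul_le_mul_of_nonneg_left (le_trans ?_ (pow_le_mass l)) hε0.le
  rw [mem_words.1 hl, ← pow_mul, mul_comm L k]
  refine mul_le_mul_of_nonneg_left ?_ hc₀.le
  exact pow_le_pow_of_le_one κm_rpow_pos.le κm_rpow_lt_one.le (Nat.mul_le_mul_right _ hj.le)

open Classical in
lemma mass_mul_sum_ite_le {α β : List S.A} {L : ℕ} {c θ : ℝ}
    (h : ∀ (a b : List S.A), ∀ z ∈ S.J, ∀ s : ℝ, ∀ k : ℕ, s ≤ c * θ ^ k →
        ∑ l ∈ S.words (k * L), S.hitMass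
          (fun x => S.toFiniteIFS.X (a ++ α) x z - S.toFiniteIFS.X (b ++ β) x z) s l ≤
            (1 / 2) ^ k)
    (a b u : List S.A) {z : ℝ} (hz : z ∈ S.J) {s : ℝ} {k n : ℕ} (hs : s ≤ c * θ ^ k)
    (hn : k * L ≤ n) :
    S.mass u * ∑ e ∈ S.words n, (if |S.toFiniteIFS.X (a ++ (α ++ u)) (S.refPt e) z -
      S.toFiniteIFS.X (b ++ (β ++ u)) (S.refPt e) z| ≤ s then S.mass e else 0) ≤
      S.Cstar ^ 4 * (1 / 2) ^ k := by
  have hC : 0 ≤ S.Cstar ^ 4 := pow_nonneg Cstar_pos.le _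
  have hz' := gW_mem u hz
  have hb := h a b _ hz' s k hs
  set f : ℝ → ℝ := fun x => S.toFiniteIFS.X (a ++ α) x (S.toFiniteIFS.gW u z) -
    S.toFiniteIFS.X (b ++ β) x (S.toFiniteIFS.gW u z) with hf
  rw [Finset.mul_sum]
  calc _ ≤ ∑ e ∈ S.words n, S.Cstar ^ 4 * S.hitMass f s (u ++ e) := by
        refine Finset.sum_le_sum fun e _ => ?_
        split_ifs with hX
        · have hr := S.refPt_mem e
          have hrJ := cyl_subset_J e hr
          have hit : S.hitMass f s (u ++ e) = S.mass (u ++ e) := by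
            refine if_pos ⟨_, gW_mem_cyl_append u hr, ?_⟩
            rw [← List.append_assoc, ← List.append_assoc, X_append _ u hrJ hz,
              X_append _ u hrJ hz, add_sub_add_right_eq_sub] at hX
            exact hX
          rw [hit]
          exact mul_mass_le u e
        · rw [mul_zero]
          exact mul_nonneg hC (hitMass_nonneg _ _ _)
    _ = S.Cstar ^ 4 * ∑ e ∈ S.words n, S.hitMass f s (u ++ e) := (Finset.mul_sum _ _ _).symm
    _ ≤ S.Cstar ^ 4 * ∑ l ∈ S.words (u.length + n), S.hitMass f s l := by
        refine mul_le_mul_of_nonneg_left ?_ hC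
        rw [sum_words_add]
        exact Finset.single_le_sum (f := fun v => ∑ e ∈ S.words n, S.hitMass f s (v ++ e))
          (fun v _ => Finset.sum_nonneg fun e _ => hitMass_nonneg _ _ _) (by simp)
    _ ≤ S.Cstar ^ 4 * ∑ l ∈ S.words (k * L), S.hitMass f s l :=
        mul_le_mul_of_nonneg_left (sum_hitMass_anti f s (by omega)) hC
    _ ≤ S.Cstar ^ 4 * (1 / 2) ^ k := mul_le_mul_of_nonneg_left hb hC

end FiniteGibbsIFS

namespace FiniteIFS

variable {S : FiniteIFS}

variable (S) in
/-- The sum of `h` over the words of length `n` ending in `u`. -/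
noncomputable def suffixSum (n : ℕ) (h : List S.A → ℝ) (u : List S.A) : ℝ :=
  ∑ a ∈ S.words (n - u.length), h (a ++ u)

lemma suffixSum_nonneg {n : ℕ} {h : List S.A → ℝ} (hh : ∀ l, 0 ≤ h l) (u : List S.A) :
    0 ≤ S.suffixSum n h u :=
  Finset.sum_nonneg fun _ _ => hh _

lemma suffixSum_mono {n : ℕ} {h m : List S.A → ℝ} (hh : ∀ l, h l ≤ m l) (u : List S.A) :
    S.suffixSum n h u ≤ S.suffixSum n m u :=
  Finset.sum_le_sum fun _ _ => hh _

lemma suffixSum_eq_sum {n N : ℕ} (h : List S.A → ℝ) {u : List S.A} (hu : u.length + N ≤ n) :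
    S.suffixSum n h u = ∑ α ∈ S.words N, S.suffixSum n h (α ++ u) := by
  have e : n - u.length = (n - u.length - N) + N := by omega
  rw [suffixSum, e, sum_words_add, Finset.sum_comm]
  refine Finset.sum_congr rfl fun α hα => ?_
  rw [suffixSum, List.length_append, mem_words.1 hα]
  have e' : n - u.length - N = n - (N + u.length) := by omega
  rw [e']
  simp only [List.append_assoc]

lemma le_pow_mul_add_sum_min {n N : ℕ} {H M : List S.A → ℝ} (h0 : ∀ l, 0 ≤ H l)
    (hHM : ∀ l, H l ≤ M l)
    (hH : ∀ u : List S.A, u.length + N ≤ n → H u = ∑ α ∈ S.words N, H (α ++ u))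
    (hM : ∀ u : List S.A, u.length + N ≤ n → M u = ∑ α ∈ S.words N, M (α ++ u))
    {q : ℝ} (hq : 0 ≤ q) {α β : List S.A} (hα : α ∈ S.words N) (hβ : β ∈ S.words N)
    (hqα : ∀ u, M u - M (α ++ u) ≤ q * M u) (hqβ : ∀ u, M u - M (β ++ u) ≤ q * M u)
    (k : ℕ) (u : List S.A) (hu : u.length + k * N ≤ n) :
    H u ≤ q ^ k * M u + ∑ j ∈ Finset.range k, ∑ v ∈ S.words (j * N),
      min (H (α ++ (v ++ u))) (H (β ++ (v ++ u))) := by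
  classical
  induction k generalizing u with
  | zero => simpa using hHM u
  | succ k ih =>
    have hk : (k + 1) * N = k * N + N := by ring
    have hu1 : u.length + N ≤ n := by omega
    set P : List S.A → ℝ := fun v => min (H (α ++ v)) (H (β ++ v)) with hP
    have hP0 : ∀ v, 0 ≤ P v := fun v => le_min (h0 _) (h0 _)
    have key : ∀ γ ∈ S.words N, M u - M (γ ++ u) ≤ q * M u → H (γ ++ u) ≤ P u →
        H u ≤ q ^ (k + 1) * M u +
          ∑ j ∈ Finset.range (k + 1), ∑ v ∈ S.words (j * N), P (v ++ u) := by
      intro γ hγ hqγ hmin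
      have hrest : ∀ ζ ∈ S.words N, H (ζ ++ u) ≤ q ^ k * M (ζ ++ u) +
          ∑ j ∈ Finset.range k, ∑ v ∈ S.words (j * N), P (v ++ (ζ ++ u)) := by
        intro ζ hζ
        refine ih (ζ ++ u) ?_
        rw [List.length_append, mem_words.1 hζ]
        omega
      have hsum : ∑ ζ ∈ (S.words N).erase γ, M (ζ ++ u) ≤ q * M u := by
        refine le_trans (le_of_eq ?_) hqγ
        rw [hM u hu1, ← Finset.add_sum_erase _ _ hγ]
        ring
      have hshift : ∑ ζ ∈ S.words N, ∑ j ∈ Finset.range k, ∑ v ∈ S.words (j * N),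
          P (v ++ (ζ ++ u)) =
          ∑ j ∈ Finset.range k, ∑ v ∈ S.words ((j + 1) * N), P (v ++ u) := by
        rw [Finset.sum_comm]
        refine Finset.sum_congr rfl fun j _ => ?_
        rw [add_mul, one_mul, sum_words_add, Finset.sum_comm]
        simp only [List.append_assoc]
      have herase : ∑ ζ ∈ (S.words N).erase γ, ∑ j ∈ Finset.range k, ∑ v ∈ S.words (j * N),
          P (v ++ (ζ ++ u)) ≤ ∑ ζ ∈ S.words N, ∑ j ∈ Finset.range k, ∑ v ∈ S.words (j * N),
          P (v ++ (ζ ++ u)) :=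
        Finset.sum_le_sum_of_subset_of_nonneg (Finset.erase_subset _ _) fun _ _ _ =>
          Finset.sum_nonneg fun _ _ => Finset.sum_nonneg fun _ _ => hP0 _
      have hothers := Finset.sum_le_sum fun ζ hζ => hrest ζ (Finset.mem_of_mem_erase (a := γ) hζ)
      rw [Finset.sum_add_distrib, ← Finset.mul_sum] at hothers
      have hqk := mul_le_mul_of_nonneg_left hsum (pow_nonneg hq k)
      rw [hH u hu1, ← Finset.add_sum_erase _ _ hγ, Finset.sum_range_succ', zero_mul,
        sum_words_zero, List.nil_append, pow_succ, mul_assoc]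
      linarith
    rcases le_total (H (α ++ u)) (H (β ++ u)) with hle | hle
    · exact key α hα (hqα u) (le_min le_rfl hle)
    · exact key β hβ (hqβ u) (le_min hle le_rfl)

end FiniteIFS

lemma min_le_add_mul_div {p q τ : ℝ} (hp : 0 ≤ p) (hq : 0 ≤ q) (hτ : 0 < τ) :
    min p q ≤ τ + p * q / τ := by
  have hpq : 0 ≤ p * q / τ := by positivity
  by_cases h : min p q ≤ τ
  · linarith
  · push Not at h
    have h1 : τ < p := h.trans_le (min_le_left _ _)
    have h2 : q ≤ p * q / τ := by
      rw [le_div_iff₀ hτ, mul_comm]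
      exact mul_le_mul_of_nonneg_right h1.le hq
    linarith [min_le_right p q]

namespace FiniteGibbsIFS

open FiniteIFS

variable {S : FiniteGibbsIFS}

lemma mass_append_le_left (l l' : List S.A) : S.mass (l ++ l') ≤ S.mass l :=
  ENNReal.toReal_mono (measure_ne_top _ _) (measure_mono (cyl_append_subset l l'))

lemma suffixSum_mass_le_one (n : ℕ) (u : List S.A) :
    S.toFiniteIFS.suffixSum n S.mass u ≤ 1 := by
  rw [← sum_mass_words (S := S) (n - u.length)]
  exact Finset.sum_le_sum fun a _ => mass_append_le_left a u

lemma suffixSum_mass_sub_le (n : ℕ) (α u : List S.A) :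
    S.toFiniteIFS.suffixSum n S.mass u - S.toFiniteIFS.suffixSum n S.mass (α ++ u) ≤
      (1 - S.mass α / S.Cstar ^ 12) * S.toFiniteIFS.suffixSum n S.mass u := by
  have hC : 0 < S.Cstar := Cstar_pos
  have h1 : S.toFiniteIFS.suffixSum n S.mass u ≤ S.Cstar ^ 4 * S.mass u := by
    calc S.toFiniteIFS.suffixSum n S.mass u
        ≤ ∑ a ∈ S.words (n - u.length), S.mass a * (S.Cstar ^ 4 * S.mass u) := by
          refine Finset.sum_le_sum fun a _ => (mass_append_le a u).trans_eq ?_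
          ring
      _ = S.Cstar ^ 4 * S.mass u := by
          rw [← Finset.sum_mul, sum_mass_words, one_mul]
  have h2 : S.mass (α ++ u) ≤
      S.Cstar ^ 4 * S.toFiniteIFS.suffixSum n S.mass (α ++ u) := by
    calc S.mass (α ++ u)
        = ∑ a ∈ S.words (n - (α ++ u).length), S.mass a * S.mass (α ++ u) := by
          rw [← Finset.sum_mul, sum_mass_words, one_mul]
      _ ≤ ∑ a ∈ S.words (n - (α ++ u).length), S.Cstar ^ 4 * S.mass (a ++ (α ++ u)) :=
          Finset.sum_le_sum fun a _ => mul_mass_le a (α ++ u)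
      _ = _ := (Finset.mul_sum _ _ _).symm
  have h3 : S.mass α * S.toFiniteIFS.suffixSum n S.mass u ≤
      S.Cstar ^ 12 * S.toFiniteIFS.suffixSum n S.mass (α ++ u) := by
    calc _ ≤ S.mass α * (S.Cstar ^ 4 * S.mass u) :=
          mul_le_mul_of_nonneg_left h1 (mass_nonneg _)
      _ = S.Cstar ^ 4 * (S.mass α * S.mass u) := by ring
      _ ≤ S.Cstar ^ 4 * (S.Cstar ^ 4 *
            (S.Cstar ^ 4 * S.toFiniteIFS.suffixSum n S.mass (α ++ u))) := by
          refine mul_le_mul_of_nonneg_left ?_ (by positivity)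
          exact (mul_mass_le α u).trans (mul_le_mul_of_nonneg_left h2 (by positivity))
      _ = _ := by ring
  have h4 : S.mass α / S.Cstar ^ 12 * S.toFiniteIFS.suffixSum n S.mass u ≤
      S.toFiniteIFS.suffixSum n S.mass (α ++ u) := by
    rw [div_mul_eq_mul_div, div_le_iff₀ (by positivity), mul_comm _ (S.Cstar ^ 12)]
    exact h3
  linarith

open Classical in
lemma sum_mass_mul_suffixSum_mul_le {B σ : ℝ} {n : ℕ} {t : ℝ → ℝ} {z : ℝ} (α β u : List S.A)
    (h : ∀ a b : List S.A, ∑ e ∈ S.words n, (if |S.toFiniteIFS.X (a ++ (α ++ u)) (S.refPt e) z -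
      S.toFiniteIFS.X (b ++ (β ++ u)) (S.refPt e) z| ≤ 2 * σ then S.mass e else 0) ≤ B) :
    ∑ e ∈ S.words n, S.mass e *
      (S.toFiniteIFS.suffixSum n (fun l => if |S.toFiniteIFS.X l (S.refPt e) z -
        t (S.refPt e)| ≤ σ then S.mass l else 0) (α ++ u) *
      S.toFiniteIFS.suffixSum n (fun l => if |S.toFiniteIFS.X l (S.refPt e) z -
        t (S.refPt e)| ≤ σ then S.mass l else 0) (β ++ u)) ≤ B := by
  have hB : 0 ≤ B := le_trans
    (Finset.sum_nonneg fun e _ => by split_ifs <;> simp [mass_nonneg]) (h [] [])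
  calc _ ≤ ∑ e ∈ S.words n, ∑ a ∈ S.words (n - (α ++ u).length),
        ∑ b ∈ S.words (n - (β ++ u).length), S.mass (a ++ (α ++ u)) * S.mass (b ++ (β ++ u)) *
          (if |S.toFiniteIFS.X (a ++ (α ++ u)) (S.refPt e) z -
      S.toFiniteIFS.X (b ++ (β ++ u)) (S.refPt e) z| ≤ 2 * σ then S.mass e else 0) := by
        refine Finset.sum_le_sum fun e _ => ?_
        rw [suffixSum, suffixSum, Finset.sum_mul_sum, Finset.mul_sum]
        refine Finset.sum_le_sum fun a _ => ?_
        rw [Finset.mul_sum]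
        refine Finset.sum_le_sum fun b _ => ?_
        have ha := mass_nonneg (a ++ (α ++ u))
        have hb := mass_nonneg (b ++ (β ++ u))
        have he := mass_nonneg e
        by_cases h1 : |S.toFiniteIFS.X (a ++ (α ++ u)) (S.refPt e) z - t (S.refPt e)| ≤ σ
        · by_cases h2 : |S.toFiniteIFS.X (b ++ (β ++ u)) (S.refPt e) z - t (S.refPt e)| ≤ σ
          · rw [if_pos h1, if_pos h2, if_pos]
            · exact (mul_comm _ _).le
            · have h1' := abs_le.1 h1
              have h2' := abs_le.1 h2
              rw [abs_le]
              constructor <;> linarith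
          · rw [if_neg h2, mul_zero, mul_zero]
            split_ifs <;> positivity
        · rw [if_neg h1, zero_mul, mul_zero]
          split_ifs <;> positivity
    _ = ∑ a ∈ S.words (n - (α ++ u).length), ∑ b ∈ S.words (n - (β ++ u).length),
        S.mass (a ++ (α ++ u)) * S.mass (b ++ (β ++ u)) * ∑ e ∈ S.words n,
          (if |S.toFiniteIFS.X (a ++ (α ++ u)) (S.refPt e) z -
      S.toFiniteIFS.X (b ++ (β ++ u)) (S.refPt e) z| ≤ 2 * σ then S.mass e else 0) := by
        rw [Finset.sum_comm]
        refine Finset.sum_congr rfl fun a _ => ?_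
        rw [Finset.sum_comm]
        simp only [Finset.mul_sum]
    _ ≤ ∑ a ∈ S.words (n - (α ++ u).length), ∑ b ∈ S.words (n - (β ++ u).length),
        S.mass (a ++ (α ++ u)) * S.mass (b ++ (β ++ u)) * B := by
        refine Finset.sum_le_sum fun a _ => Finset.sum_le_sum fun b _ => ?_
        exact mul_le_mul_of_nonneg_left (h a b) (mul_nonneg (mass_nonneg _) (mass_nonneg _))
    _ = S.toFiniteIFS.suffixSum n S.mass (α ++ u) *
          S.toFiniteIFS.suffixSum n S.mass (β ++ u) * B := by
        rw [suffixSum, suffixSum, Finset.sum_mul_sum, Finset.sum_mul]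
        simp only [Finset.sum_mul]
    _ ≤ 1 * 1 * B := by
        gcongr
        · exact suffixSum_nonneg mass_nonneg _
        · exact suffixSum_mass_le_one _ _
        · exact suffixSum_mass_le_one _ _
    _ = B := by ring

end FiniteGibbsIFS

namespace FiniteGibbsIFS

open FiniteIFS

variable {S : FiniteGibbsIFS}

open Classical in
variable (S) in
/-- The measure of the cylinder of `l` if `X_l(x, z)` is within `σ` of `τ`, and `0` otherwise. -/
noncomputable def nearMass (σ x z τ : ℝ) (l : List S.A) : ℝ :=
  if |S.toFiniteIFS.X l x z - τ| ≤ σ then S.mass l else 0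

lemma nearMass_nonneg (σ x z τ : ℝ) (l : List S.A) : 0 ≤ S.nearMass σ x z τ l := by
  unfold nearMass
  split_ifs
  · exact mass_nonneg l
  · exact le_rfl

lemma nearMass_le (σ x z τ : ℝ) (l : List S.A) : S.nearMass σ x z τ l ≤ S.mass l := by
  unfold nearMass
  split_ifs
  · exact le_rfl
  · exact mass_nonneg l

variable (S) in
/-- The correlation sum of the non-concentration estimate, with weights replaced by measures. -/
noncomputable def nearSum (t : ℝ → ℝ) (σ z : ℝ) (n : ℕ) : ℝ :=
  ∑ e ∈ S.words n, S.mass e * ∑ a ∈ S.words n,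
    S.nearMass σ (S.refPt e) z (t (S.refPt e)) a

lemma sum_mass_mul_min_le {α β : List S.A} {L : ℕ} {c θ : ℝ}
    (h : ∀ (a b : List S.A), ∀ z ∈ S.J, ∀ s : ℝ, ∀ k : ℕ, s ≤ c * θ ^ k →
        ∑ l ∈ S.words (k * L), S.hitMass
          (fun x => S.toFiniteIFS.X (a ++ α) x z - S.toFiniteIFS.X (b ++ β) x z) s l ≤
            (1 / 2) ^ k)
    (t : ℝ → ℝ) {σ z : ℝ} (hz : z ∈ S.J) {k n : ℕ} (hσ : 2 * σ ≤ c * θ ^ (2 * k))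
    (hn : 2 * k * L ≤ n) (u : List S.A) :
    ∑ e ∈ S.words n, S.mass e *
      min (S.toFiniteIFS.suffixSum n (S.nearMass σ (S.refPt e) z (t (S.refPt e))) (α ++ u))
        (S.toFiniteIFS.suffixSum n (S.nearMass σ (S.refPt e) z (t (S.refPt e))) (β ++ u)) ≤
      (1 / 2) ^ k * ((1 + S.Cstar ^ 4) / S.mass u) := by
  have hu := mass_pos u
  set H : List S.A → List S.A → ℝ := fun e =>
    S.toFiniteIFS.suffixSum n (S.nearMass σ (S.refPt e) z (t (S.refPt e)))
  have hH : ∀ e l, 0 ≤ H e l := fun e l => suffixSum_nonneg (nearMass_nonneg _ _ _ _) l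
  set τ : ℝ := (1 / 2) ^ k with hτ
  have hτ0 : 0 < τ := by positivity
  have hprod : ∑ e ∈ S.words n, S.mass e * (H e (α ++ u) * H e (β ++ u)) ≤
      S.Cstar ^ 4 * (1 / 2) ^ (2 * k) / S.mass u := by
    refine sum_mass_mul_suffixSum_mul_le α β u fun a b => ?_
    rw [le_div_iff₀ hu, mul_comm]
    exact mass_mul_sum_ite_le h a b u hz hσ hn
  calc ∑ e ∈ S.words n, S.mass e * min (H e (α ++ u)) (H e (β ++ u))
      ≤ ∑ e ∈ S.words n, S.mass e * (τ + H e (α ++ u) * H e (β ++ u) / τ) :=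
        Finset.sum_le_sum fun e _ => mul_le_mul_of_nonneg_left
          (min_le_add_mul_div (hH _ _) (hH _ _) hτ0) (mass_nonneg e)
    _ = τ + (∑ e ∈ S.words n, S.mass e * (H e (α ++ u) * H e (β ++ u))) / τ := by
        simp only [mul_add, Finset.sum_add_distrib, ← Finset.sum_mul, sum_mass_words, one_mul,
          Finset.sum_div, mul_div_assoc]
    _ ≤ τ + S.Cstar ^ 4 * (1 / 2) ^ (2 * k) / S.mass u / τ := by gcongr
    _ = τ * (1 + S.Cstar ^ 4 / S.mass u) := by
        rw [mul_comm 2 k, pow_mul, ← hτ]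
        field_simp
    _ ≤ τ * ((1 + S.Cstar ^ 4) / S.mass u) := by
        rw [add_div]
        have : 1 ≤ 1 / S.mass u := (one_le_div hu).2 (mass_le_one u)
        gcongr

lemma MNL.exists_nearSum_le {CM : ℝ} (hMNL : S.MNL CM) (hCM : 0 < CM)
    (hF : S.attract.Nonempty) :
    ∃ N : ℕ, 1 ≤ N ∧ ∃ c : ℝ, 0 < c ∧ ∃ θ ∈ Set.Ioo (0 : ℝ) 1, ∃ ρ ∈ Set.Ioo (0 : ℝ) 1,
      ∃ C : ℝ, 0 ≤ C ∧ ∀ (t : ℝ → ℝ) (σ : ℝ), ∀ z ∈ S.J, ∀ n k : ℕ, N * k ≤ n →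
        σ ≤ c * θ ^ k → S.nearSum t σ z n ≤ C * ρ ^ k := by
  obtain ⟨N, L, hN, α, hα, β, hβ, c, hc, θ, hθ, hhit⟩ := hMNL.exists_sum_hitMass_le hCM hF
  have hC1 := S.hCstar
  have hC : 0 < S.Cstar := Cstar_pos
  set p : ℝ := min (S.mass α) (S.mass β) / S.Cstar ^ 12 with hp
  have hp0 : 0 < p := div_pos (lt_min (mass_pos α) (mass_pos β)) (by positivity)
  set q : ℝ := 1 - p with hq
  have hp1 : p ≤ 1 := by
    rw [hp, div_le_one (by positivity)]
    exact (min_le_left _ _).trans ((mass_le_one α).trans (one_le_pow₀ hC1))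
  have hq0 : 0 ≤ q := by linarith
  have hsuf : ∀ γ, min (S.mass α) (S.mass β) ≤ S.mass γ → ∀ (n : ℕ) (u : List S.A),
      S.toFiniteIFS.suffixSum n S.mass u - S.toFiniteIFS.suffixSum n S.mass (γ ++ u) ≤
        q * S.toFiniteIFS.suffixSum n S.mass u := by
    intro γ hγ n u
    refine (suffixSum_mass_sub_le n γ u).trans ?_
    refine mul_le_mul_of_nonneg_right ?_ (suffixSum_nonneg mass_nonneg u)
    rw [hq, hp]
    gcongr
  set lam := S.κm ^ S.δ
  have hlam0 : 0 < lam := κm_rpow_pos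
  have hlam1 : lam < 1 := κm_rpow_lt_one
  set c₀ := (S.hi - S.lo) ^ S.δ / S.Cstar
  have hc₀ : 0 < c₀ := hi_sub_lo_rpow_div_pos
  have : Nonempty S.A := S.neA
  have hcard : (1 : ℝ) ≤ Fintype.card S.A := by exact_mod_cast Fintype.card_pos (α := S.A)
  set b : ℝ := Fintype.card S.A / lam with hb
  have hb1 : 1 ≤ b := (one_le_div hlam0).2 (hlam1.le.trans hcard)
  obtain ⟨r, hr⟩ := exists_pow_lt_of_lt_one (show 0 < 1 / (4 * b ^ N) by positivity)
    (show (1 / 2 : ℝ) < 1 by norm_num)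
  set K : ℝ := (1 + S.Cstar ^ 4) / c₀ with hK
  have hK0 : 0 ≤ K := by positivity
  refine ⟨N + 2 * r * L, by omega, c / 2, by positivity, θ ^ (2 * r + 1),
    ⟨pow_pos hθ.1 _, pow_lt_one₀ hθ.1.le hθ.2 (by omega)⟩, max q (1 / 2),
    ⟨lt_max_of_lt_right (by norm_num), max_lt (by linarith) (by norm_num)⟩, 1 + K,
    by positivity, ?_⟩
  intro t σ z hz n k hn hσ
  have hkN : k * N ≤ n := by nlinarith [Nat.zero_le (2 * r * L * k)]
  have hkL : 2 * (r * k) * L ≤ n := by nlinarith [Nat.zero_le (N * k)]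
  have hσ' : 2 * σ ≤ c * θ ^ (2 * (r * k)) := by
    have h1 : (θ ^ (2 * r + 1)) ^ k ≤ θ ^ (2 * (r * k)) := by
      rw [← pow_mul]
      exact pow_le_pow_of_le_one hθ.1.le hθ.2.le (by nlinarith)
    nlinarith
  set H : List S.A → List S.A → ℝ := fun e =>
    S.toFiniteIFS.suffixSum n (S.nearMass σ (S.refPt e) z (t (S.refPt e))) with hH
  have htree : ∀ e, ∑ a ∈ S.words n, S.nearMass σ (S.refPt e) z (t (S.refPt e)) a ≤
      q ^ k + ∑ j ∈ Finset.range k, ∑ v ∈ S.words (j * N),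
        min (H e (α ++ v)) (H e (β ++ v)) := by
    intro e
    have h := le_pow_mul_add_sum_min (n := n) (H := H e)
      (M := S.toFiniteIFS.suffixSum n S.mass)
      (fun l => suffixSum_nonneg (nearMass_nonneg _ _ _ _) l)
      (fun l => suffixSum_mono (nearMass_le _ _ _ _) l)
      (fun u hu => suffixSum_eq_sum _ hu) (fun u hu => suffixSum_eq_sum _ hu) hq0 hα hβ
      (hsuf α (min_le_left _ _) n) (hsuf β (min_le_right _ _) n) k [] (by simpa using hkN)
    have hnil : H e [] = ∑ a ∈ S.words n, S.nearMass σ (S.refPt e) z (t (S.refPt e)) a := by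
      simp [hH, suffixSum]
    have hone : S.toFiniteIFS.suffixSum n S.mass [] = 1 := by
      simp [suffixSum, sum_mass_words]
    simp only [List.append_nil] at h
    rw [hnil, hone, mul_one] at h
    exact h
  have hnode : ∀ j ∈ Finset.range k, ∀ v ∈ S.words (j * N),
      ∑ e ∈ S.words n, S.mass e * min (H e (α ++ v)) (H e (β ++ v)) ≤
        (1 / 2) ^ (r * k) * (K / lam ^ (j * N)) := by
    intro j _ v hv
    refine (sum_mass_mul_min_le hhit t hz hσ' hkL v).trans ?_
    refine mul_le_mul_of_nonneg_left ?_ (by positivity)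
    rw [hK, div_div]
    have := pow_le_mass v
    rw [mem_words.1 hv] at this
    gcongr
  have hlevel : ∀ j ∈ Finset.range k, ∑ v ∈ S.words (j * N), ∑ e ∈ S.words n,
      S.mass e * min (H e (α ++ v)) (H e (β ++ v)) ≤ (1 / 2) ^ (r * k) * (K * (b ^ N) ^ k) := by
    intro j hj
    refine (Finset.sum_le_sum (hnode j hj)).trans ?_
    rw [Finset.sum_const, card_words, nsmul_eq_mul, Nat.cast_pow]
    calc _ = (1 / 2) ^ (r * k) * (K * b ^ (j * N)) := by
          rw [hb, div_pow]
          ring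
      _ ≤ (1 / 2) ^ (r * k) * (K * (b ^ N) ^ k) := by
          rw [← pow_mul, mul_comm N k]
          gcongr
          exact (Finset.mem_range.1 hj).le
  have hpow : (k : ℝ) * ((1 / 2) ^ (r * k) * (K * (b ^ N) ^ k)) ≤ K * (1 / 2) ^ k := by
    have hk2 : (k : ℝ) ≤ 2 ^ k := by exact_mod_cast Nat.lt_two_pow_self.le
    have hbase : 2 * ((1 / 2) ^ r * b ^ N) ≤ (1 / 2 : ℝ) := by
      have hbN : 0 < b ^ N := by positivity
      rw [lt_div_iff₀ (by positivity)] at hr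
      linarith
    calc _ ≤ (2 : ℝ) ^ k * ((1 / 2) ^ (r * k) * (K * (b ^ N) ^ k)) := by gcongr
      _ = K * (2 * ((1 / 2) ^ r * b ^ N)) ^ k := by
          rw [pow_mul, mul_pow, mul_pow]
          ring
      _ ≤ K * (1 / 2) ^ k := by gcongr
  calc S.nearSum t σ z n
      ≤ ∑ e ∈ S.words n, S.mass e * (q ^ k + ∑ j ∈ Finset.range k, ∑ v ∈ S.words (j * N),
        min (H e (α ++ v)) (H e (β ++ v))) :=
        Finset.sum_le_sum fun e _ => mul_le_mul_of_nonneg_left (htree e) (mass_nonneg e)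
    _ = q ^ k + ∑ j ∈ Finset.range k, ∑ v ∈ S.words (j * N), ∑ e ∈ S.words n,
          S.mass e * min (H e (α ++ v)) (H e (β ++ v)) := by
        simp only [mul_add, Finset.sum_add_distrib, ← Finset.sum_mul, sum_mass_words, one_mul,
          Finset.mul_sum]
        rw [Finset.sum_comm]
        congr 1
        exact Finset.sum_congr rfl fun j _ => Finset.sum_comm
    _ ≤ q ^ k + ∑ j ∈ Finset.range k, (1 / 2) ^ (r * k) * (K * (b ^ N) ^ k) := by
        gcongr with j hj
        exact hlevel j hj
    _ ≤ q ^ k + K * (1 / 2) ^ k := by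
        rw [Finset.sum_const, Finset.card_range, nsmul_eq_mul]
        gcongr
    _ ≤ max q (1 / 2) ^ k + K * max q (1 / 2) ^ k := by
        gcongr
        · exact le_max_left _ _
        · exact le_max_right _ _
    _ = (1 + K) * max q (1 / 2) ^ k := by ring

lemma sum_w_mul_indicator_le {x₀ y₀ : ℝ} (hx₀ : x₀ ∈ S.J) (hy₀ : y₀ ∈ S.J) (t : ℝ → ℝ)
    (σ z : ℝ) (n : ℕ) :
    ∑' p : (Fin n → S.A) × (Fin n → S.A),
      ENNReal.ofReal (S.w (List.ofFn p.1) x₀ * S.w (List.ofFn p.2) y₀) *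
        Set.indicator
          (Set.Icc (t (S.refPt (List.ofFn p.2)) - σ) (t (S.refPt (List.ofFn p.2)) + σ))
          (fun _ => (1 : ℝ≥0∞)) (S.X (List.ofFn p.1) (S.refPt (List.ofFn p.2)) z) ≤
      ENNReal.ofReal (S.Cstar ^ 2 * S.nearSum t σ z n) := by
  have hC : 0 ≤ S.Cstar := Cstar_pos.le
  have hterm : ∀ p : (Fin n → S.A) × (Fin n → S.A),
      ENNReal.ofReal (S.w (List.ofFn p.1) x₀ * S.w (List.ofFn p.2) y₀) *
        Set.indicator
          (Set.Icc (t (S.refPt (List.ofFn p.2)) - σ) (t (S.refPt (List.ofFn p.2)) + σ))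
          (fun _ => (1 : ℝ≥0∞)) (S.X (List.ofFn p.1) (S.refPt (List.ofFn p.2)) z) ≤
      ENNReal.ofReal (S.Cstar ^ 2 * (S.mass (List.ofFn p.2) *
        S.nearMass σ (S.refPt (List.ofFn p.2)) z (t (S.refPt (List.ofFn p.2)))
          (List.ofFn p.1))) := by
    intro p
    by_cases hX : S.X (List.ofFn p.1) (S.refPt (List.ofFn p.2)) z ∈
        Set.Icc (t (S.refPt (List.ofFn p.2)) - σ) (t (S.refPt (List.ofFn p.2)) + σ)
    · rw [Set.indicator_of_mem hX, mul_one, nearMass, if_pos]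
      · refine ENNReal.ofReal_le_ofReal ?_
        have h1 : S.w (List.ofFn p.1) x₀ ≤ S.Cstar * S.mass (List.ofFn p.1) :=
          (S.hw _ _ hx₀).2
        have h2 : S.w (List.ofFn p.2) y₀ ≤ S.Cstar * S.mass (List.ofFn p.2) :=
          (S.hw _ _ hy₀).2
        have h0 : 0 ≤ S.w (List.ofFn p.2) y₀ := by
          have h := (mass_nonneg (List.ofFn p.2)).trans (S.hw _ _ hy₀).1
          exact nonneg_of_mul_nonneg_right h Cstar_pos
        calc _ ≤ (S.Cstar * S.mass (List.ofFn p.1)) * (S.Cstar * S.mass (List.ofFn p.2)) :=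
              mul_le_mul h1 h2 h0 (mul_nonneg hC (mass_nonneg _))
          _ = _ := by ring
      · rw [abs_le]
        have h1 := hX.1
        have h2 := hX.2
        constructor <;> linarith
    · rw [Set.indicator_of_notMem hX, mul_zero]
      exact zero_le
  rw [tsum_fintype]
  refine (Finset.sum_le_sum fun p _ => hterm p).trans ?_
  rw [← ENNReal.ofReal_sum_of_nonneg fun p _ => mul_nonneg (pow_nonneg hC 2)
    (mul_nonneg (mass_nonneg _) (nearMass_nonneg _ _ _ _ _)), ← Finset.mul_sum,
    Fintype.sum_prod_type_right]
  simp only [nearSum, sum_words_ofFn, Finset.mul_sum]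
  exact le_rfl

end FiniteGibbsIFS

lemma exists_rpow_add_pow_bound {N : ℕ} (hN : 1 ≤ N) {c θ ρ C : ℝ} (hc : 0 < c)
    (hθ : θ ∈ Set.Ioo (0 : ℝ) 1) (hρ : ρ ∈ Set.Ioo (0 : ℝ) 1) (hC : 0 ≤ C) :
    ∃ γ ∈ Set.Ioo (0 : ℝ) 1, ∃ ρ' ∈ Set.Ioo (0 : ℝ) 1, ∃ C₀ : ℝ, 1 ≤ C₀ ∧
      ∀ (σ Q : ℝ) (n : ℕ), 0 < σ → σ ≤ c →
        (∀ k : ℕ, N * k ≤ n → σ ≤ c * θ ^ k → Q ≤ C * ρ ^ k) → Q ≤ C₀ * (σ ^ γ + ρ' ^ n) := by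
  obtain ⟨hθ0, hθ1⟩ := hθ
  obtain ⟨hρ0, hρ1⟩ := hρ
  have hη0 : 0 < θ * ρ := mul_pos hθ0 hρ0
  have hηρ : θ * ρ < ρ := mul_lt_of_lt_one_left hρ0 hθ1
  have hη1 : θ * ρ < 1 := hηρ.trans hρ1
  have hlogη : Real.log (θ * ρ) < 0 := Real.log_neg hη0 hη1
  have hlogρ : Real.log ρ < 0 := Real.log_neg hρ0 hρ1
  set γ := Real.log ρ / Real.log (θ * ρ) with hγ
  have hγ0 : 0 < γ := div_pos_of_neg_of_neg hlogρ hlogη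
  have hγ1 : γ < 1 := (div_lt_one_of_neg hlogη).2 (Real.log_lt_log hη0 hηρ)
  have hηγ : (θ * ρ) ^ γ = ρ := by
    rw [Real.rpow_def_of_pos hη0, hγ, mul_div_cancel₀ _ hlogη.ne, Real.exp_log hρ0]
  have hN0 : (N : ℝ) ≠ 0 := by positivity
  set ρ' : ℝ := ρ ^ (1 / (N : ℝ)) with hρ'
  have hρ'0 : 0 < ρ' := Real.rpow_pos_of_pos hρ0 _
  have hρ'1 : ρ' < 1 := Real.rpow_lt_one hρ0.le hρ1 (by positivity)
  have hρ'N : ρ' ^ N = ρ := by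
    rw [hρ', ← Real.rpow_natCast, ← Real.rpow_mul hρ0.le, one_div_mul_cancel hN0, Real.rpow_one]
  have hcγ : 0 < c ^ γ := Real.rpow_pos_of_pos hc _
  set D := C / ρ * (1 + 1 / c ^ γ) with hD
  refine ⟨γ, ⟨hγ0, hγ1⟩, ρ', ⟨hρ'0, hρ'1⟩, max 1 D, le_max_left _ _, ?_⟩
  intro σ Q n hσ hσc hQ
  obtain ⟨i, hi1, hi2⟩ := exists_nat_pow_near_of_lt_one (div_pos hσ hc)
    ((div_le_one hc).2 hσc) hη0 hη1
  rw [lt_div_iff₀ hc] at hi1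
  rw [div_le_iff₀ hc] at hi2
  have hσγ : ρ ^ i ≤ σ ^ γ / (ρ * c ^ γ) := by
    rw [le_div_iff₀ (by positivity)]
    calc ρ ^ i * (ρ * c ^ γ) = ((θ * ρ) ^ (i + 1) * c) ^ γ := by
          rw [Real.mul_rpow (by positivity) hc.le, ← Real.rpow_pow_comm hη0.le, hηγ]
          ring
      _ ≤ σ ^ γ := Real.rpow_le_rpow (by positivity) hi1.le hγ0.le
  have hnρ : ρ ^ (n / N) ≤ ρ' ^ n / ρ := by
    rw [le_div_iff₀ hρ0, ← pow_succ]
    nth_rewrite 1 [← hρ'N]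
    rw [← pow_mul]
    exact pow_le_pow_of_le_one hρ'0.le hρ'1.le (Nat.lt_mul_div_succ n (by omega)).le
  have hk := hQ (min i (n / N))
    ((Nat.mul_le_mul_left N (min_le_right _ _)).trans (Nat.mul_div_le n N)) (by
      refine hi2.trans ?_
      rw [mul_comm]
      refine mul_le_mul_of_nonneg_left ?_ hc.le
      calc (θ * ρ) ^ i ≤ θ ^ i := by
            gcongr
            exact mul_le_of_le_one_right hθ0.le hρ1.le
        _ ≤ θ ^ min i (n / N) := pow_le_pow_of_le_one hθ0.le hθ1.le (min_le_left _ _))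
  have hmin : ρ ^ min i (n / N) ≤ ρ ^ i + ρ ^ (n / N) := by
    rcases min_choice i (n / N) with h | h <;> rw [h]
    · linarith [pow_pos hρ0 (n / N)]
    · linarith [pow_pos hρ0 i]
  have hσγ0 : 0 < σ ^ γ := Real.rpow_pos_of_pos hσ _
  have hρn0 : 0 < ρ' ^ n := pow_pos hρ'0 _
  calc Q ≤ C * ρ ^ min i (n / N) := hk
    _ ≤ C * (σ ^ γ / (ρ * c ^ γ) + ρ' ^ n / ρ) := by
        gcongr
        exact hmin.trans (add_le_add hσγ hnρ)
    _ = C / ρ * (1 / c ^ γ * σ ^ γ + ρ' ^ n) := by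
        field_simp
    _ ≤ C / ρ * ((1 + 1 / c ^ γ) * (σ ^ γ + ρ' ^ n)) := by
        refine mul_le_mul_of_nonneg_left ?_ (by positivity)
        have : 0 < 1 / c ^ γ := by positivity
        nlinarith [mul_pos this hρn0]
    _ = D * (σ ^ γ + ρ' ^ n) := by
        rw [hD]
        ring
    _ ≤ max 1 D * (σ ^ γ + ρ' ^ n) := by
        gcongr
        exact le_max_right _ _

/-- **The key non-concentration estimate under (MNL)** (Proposition 6.1).

In the finite fully-branched `C^{1+α}` IFS setting with its dimension-`δ` Gibbs measure
`μ`, assume (MNL).  For every bound `A` on the `C^δ` norm of the target function `t` on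
`F`, there are `γ, ρ ∈ (0,1)` and `C₀ ≥ 1` (depending only on `A` and the IFS) such
that for all sufficiently small `σ > 0`, all `x₀, y₀, z₀ ∈ F` and all `n ≥ 1`,
`Σ_{a∈𝒜ⁿ} Σ_{c∈𝒜ⁿ} w_a(x₀) w_c(y₀) 1_{[t(x_c)-σ, t(x_c)+σ]}(X_a(x_c, z₀))
  ≤ C₀ (σ^γ + ρⁿ)`. -/
theorem nonconcentration_of_MNL (S : FiniteGibbsIFS) (CM : ℝ) (hCM : 0 < CM)
    (hMNL : S.MNL CM) :
    ∀ A : ℝ, ∃ γ ∈ Set.Ioo (0:ℝ) 1, ∃ ρ ∈ Set.Ioo (0:ℝ) 1, ∃ C₀ : ℝ, 1 ≤ C₀ ∧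
      ∃ σ₀ : ℝ, 0 < σ₀ ∧
      ∀ t : ℝ → ℝ,
        (∀ x ∈ S.attract, |t x| ≤ A) →
        (∀ x ∈ S.attract, ∀ y ∈ S.attract, |t x - t y| ≤ A * |x - y| ^ S.δ) →
        ∀ σ : ℝ, 0 < σ → σ ≤ σ₀ →
        ∀ x₀ ∈ S.attract, ∀ y₀ ∈ S.attract, ∀ z₀ ∈ S.attract, ∀ n : ℕ, 1 ≤ n →
          ∑' p : (Fin n → S.A) × (Fin n → S.A),
            ENNReal.ofReal (S.w (List.ofFn p.1) x₀ * S.w (List.ofFn p.2) y₀) *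
              Set.indicator
                (Set.Icc (t (S.refPt (List.ofFn p.2)) - σ) (t (S.refPt (List.ofFn p.2)) + σ))
                (fun _ => (1 : ℝ≥0∞))
                (S.X (List.ofFn p.1) (S.refPt (List.ofFn p.2)) z₀)
          ≤ ENNReal.ofReal (C₀ * (σ ^ γ + ρ ^ n)) := by
  intro A
  by_cases hF : S.attract.Nonempty
  swap
  · refine ⟨1 / 2, by norm_num, 1 / 2, by norm_num, 1, le_rfl, 1, one_pos, ?_⟩
    intro t _ _ σ _ _ x₀ hx₀
    exact absurd ⟨x₀, hx₀⟩ hF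
  obtain ⟨N, hN, c, hc, θ, hθ, ρ, hρ, C, hC, hnear⟩ := hMNL.exists_nearSum_le hCM hF
  obtain ⟨γ, hγ, ρ', hρ', C₀, hC₀, hbound⟩ := exists_rpow_add_pow_bound hN hc hθ hρ
    (mul_nonneg (sq_nonneg S.Cstar) hC)
  refine ⟨γ, hγ, ρ', hρ', C₀, hC₀, c, hc, ?_⟩
  intro t _ _ σ hσ hσc x₀ hx₀ y₀ hy₀ z₀ hz₀ n _
  refine (FiniteGibbsIFS.sum_w_mul_indicator_le (FiniteIFS.attract_subset_J hx₀)
    (FiniteIFS.attract_subset_J hy₀) t σ z₀ n).trans (ENNReal.ofReal_le_ofReal ?_)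
  refine hbound σ _ n hσ hσc fun k hk hσk => ?_
  rw [mul_assoc]
  exact mul_le_mul_of_nonneg_left
    (hnear t σ z₀ (FiniteIFS.attract_subset_J hz₀) n k hk hσk) (sq_nonneg _)
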